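/- Let $f_1,\dots,f_m$ be homogeneous polynomials of degree $d$ in $\mathbb{C}[z_0,\dots,z_n]$ with no common zero in $\mathbb{P}^n$, and let $\phi$ be a homogeneous polynomial of degree $\rho \ge (n+1)d - n$ (equivalently $\rho \ge (d-1)(n+1) + 1$). Then there exist homogeneous polynomials $q_1,\dots,q_m$ of degree $\rho - d$ such that $f_1 q_1 + \cdots + f_m q_m = \phi$. -/

import Mathlib

open MvPolynomial

/-!
The variables form a regular sequence of linear forms, and modulo all of them nothing is left in
positive degrees. Let `V` be the span of the `f i`, homogeneous of degree `d > 0`. Exchange the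
variables one by one for elements of `V`. Regular sequences of homogeneous elements of positive
degree can be permuted, so let the variable `x` to be exchanged come last, and let `J` be generated
by the others. By the Nullstellensatz `x` lies in the radical of the ideal of `V`. Hence no
associated prime of `A ⧸ J` contains `V`, and as the field is infinite some `g ∈ V` avoids them all.

If `A ⧸ (J + (x))` vanishes in degrees `> T`, multiplication by `x` is bijective between consecutive
pieces of `A ⧸ J` from degree `T` on, so these all have the same finite dimension. The injective
multiplication by `g` is then surjective from degree `t` to degree `t + d` for `t ≥ T`, so
`A ⧸ (J + (g))` vanishes in degrees `> T + (d - 1)`. After exchanging all `N` variables, the ideal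
of `V` contains every form of degree `> N * (d - 1)`.
-/

section GradedRing

open DirectSum Pointwise RingTheory.Sequence Submodule

variable {S A : Type*} [CommRing A] [SetLike S A] [AddSubgroupClass S A] {𝒜 : ℕ → S}
  [GradedRing 𝒜]

theorem exists_mem_graded_sub_mul_mem {J : Ideal A} (hJ : J.IsHomogeneous 𝒜) {r u : A} {d t : ℕ}
    (hr : r ∈ 𝒜 d) (hu : u ∈ 𝒜 (d + t)) (h : u ∈ J ⊔ Ideal.span {r}) :
    ∃ v ∈ 𝒜 t, u - r * v ∈ J := by
  obtain ⟨j, hj, _, hw, rfl⟩ := mem_sup.1 h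
  obtain ⟨w, rfl⟩ := Ideal.mem_span_singleton'.1 hw
  refine ⟨decompose 𝒜 w t, SetLike.coe_mem _, ?_⟩
  have hdeg : (decompose 𝒜 (j + w * r) (d + t) : A) = j + w * r := decompose_of_mem_same 𝒜 hu
  rw [← hdeg, mul_comm w, decompose_add, DirectSum.add_apply, AddMemClass.coe_add,
    coe_decompose_mul_add_of_left_mem 𝒜 hr, add_sub_cancel_right]
  exact hJ (d + t) hj

theorem exists_mem_graded_sum_mul_eq {ι : Type*} [Fintype ι] {f : ι → A} {d e : ℕ}
    (hf : ∀ i, f i ∈ 𝒜 d) {u : A} (hu : u ∈ 𝒜 (d + e)) (h : u ∈ Ideal.span (Set.range f)) :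
    ∃ q : ι → A, (∀ i, q i ∈ 𝒜 e) ∧ ∑ i, f i * q i = u := by
  obtain ⟨c, rfl⟩ := Ideal.mem_span_range_iff_exists_fun.1 h
  refine ⟨fun i => decompose 𝒜 (c i) e, fun i => SetLike.coe_mem _, ?_⟩
  conv_rhs => rw [← decompose_of_mem_same 𝒜 hu]
  simp only [decompose_sum, DirectSum.sum_apply, AddSubmonoidClass.coe_finsetSum, mul_comm (c _),
    coe_decompose_mul_add_of_left_mem 𝒜 (hf _)]

theorem le_of_le_sup_smul_of_isHomogeneous {J L : Ideal A} (hJ : J.IsHomogeneous 𝒜)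
    (hL : L.IsHomogeneous 𝒜) {a : A} {d : ℕ} (hd : 0 < d) (ha : a ∈ 𝒜 d) (h : L ≤ J ⊔ a • L) :
    L ≤ J := by
  suffices hgraded : ∀ t, ∀ u ∈ 𝒜 t, u ∈ L → u ∈ J from
    fun u hu => hJ.mem_iff.2 fun t => hgraded t _ (SetLike.coe_mem _) (hL t hu)
  intro t
  induction t using Nat.strong_induction_on with
  | _ t ih =>
  intro u hut huL
  obtain ⟨j, hj, _, ⟨v, hv, rfl⟩, rfl⟩ := mem_sup.1 (h huL)
  rw [← decompose_of_mem_same 𝒜 hut, decompose_add, DirectSum.add_apply, AddMemClass.coe_add]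
  refine J.add_mem (hJ t hj) ?_
  change (decompose 𝒜 (a * v) t : A) ∈ J
  rw [coe_decompose_mul_of_left_mem 𝒜 t ha]
  split_ifs with hdt
  · exact J.mul_mem_left a (ih (t - d) (by omega) _ (SetLike.coe_mem _) (hL (t - d) hv))
  · exact J.zero_mem

theorem torsionBy_quotient_eq_bot_of_le_smul {J : Ideal A} (hJ : J.IsHomogeneous 𝒜) {a b : A}
    {d e : ℕ} (hd : 0 < d) (ha : a ∈ 𝒜 d) (hb : b ∈ 𝒜 e)
    (h : torsionBy A (A ⧸ J) b ≤ a • torsionBy A (A ⧸ J) b) : torsionBy A (A ⧸ J) b = ⊥ := by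
  set L : Ideal A := (torsionBy A (A ⧸ J) b).comap J.mkQ with hL_def
  have mem_L : ∀ u, u ∈ L ↔ b * u ∈ J := fun u => Ideal.Quotient.eq_zero_iff_mem (a := b * u)
  have hL : L.IsHomogeneous 𝒜 := fun t u hu => by
    rw [mem_L, ← coe_decompose_mul_add_of_left_mem 𝒜 hb]
    exact hJ _ ((mem_L u).1 hu)
  have hLJ : L ≤ J ⊔ a • L := by
    intro u hu
    obtain ⟨y, hy, hyu⟩ := h hu
    obtain ⟨v, rfl⟩ := J.mkQ_surjective y
    have hj : u - a • v ∈ J := (Submodule.Quotient.eq J).1 hyu.symm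
    rw [← sub_add_cancel u (a • v)]
    exact add_mem_sup hj (smul_mem_pointwise_smul v a L hy)
  rw [eq_bot_iff, ← map_comap_eq_of_surjective J.mkQ_surjective (torsionBy A (A ⧸ J) b), ← hL_def]
  exact (map_mono (le_of_le_sup_smul_of_isHomogeneous hJ hL hd ha hLJ)).trans J.mkQ_map_self.le

theorem isWeaklyRegular_of_perm_of_homogeneous {rs rs' : List A} (h : IsWeaklyRegular A rs)
    (hrs : ∀ r ∈ rs, ∃ d > 0, r ∈ 𝒜 d) (hperm : rs.Perm rs') : IsWeaklyRegular A rs' := by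
  refine h.prototype_perm hperm fun a b ts hsub hK => ?_
  have hmem : ∀ {r}, r ∈ a :: b :: ts → ∃ d > 0, r ∈ 𝒜 d := fun hr => hrs _ (hsub.subset hr)
  obtain ⟨d, hd, ha⟩ := hmem List.mem_cons_self
  obtain ⟨e, _, hb⟩ := hmem (r := b) (by simp)
  have hts : (Ideal.ofList ts • ⊤ : Ideal A).IsHomogeneous 𝒜 := by
    rw [smul_eq_mul, Ideal.mul_top]
    refine Ideal.homogeneous_span 𝒜 _ fun r hr => ?_
    obtain ⟨i, _, hi⟩ := hmem (r := r) (by simp_all)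
    exact ⟨i, hi⟩
  exact torsionBy_quotient_eq_bot_of_le_smul hts hd ha hb hK.le

theorem isWeaklyRegular_concat_iff {rs : List A} {r : A} :
    IsWeaklyRegular A (rs ++ [r]) ↔
      IsWeaklyRegular A rs ∧ IsSMulRegular (A ⧸ Ideal.ofList rs) r := by
  rw [isWeaklyRegular_append_iff, isWeaklyRegular_singleton_iff, smul_eq_mul, Ideal.mul_top]

end GradedRing

section PrimeAvoidance

variable {k A M : Type*} [Field k] [Infinite k] [CommRing A] [Algebra k A] [IsNoetherianRing A]
  [AddCommGroup M] [Module A M] [Module.Finite A M]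

theorem exists_isSMulRegular_of_mem_radical_span (V : Submodule k A) {x : A}
    (hxV : x ∈ (Ideal.span (V : Set A)).radical) (hx : IsSMulRegular M x) :
    ∃ g ∈ V, IsSMulRegular M g := by
  by_contra! hV
  have hzd := biUnion_associatedPrimes_eq_compl_regular A M
  have hfin : Finite (associatedPrimes A M) := associatedPrimes.finite A M
  let p (P : associatedPrimes A M) : Submodule k V := (P.1.restrictScalars k).comap V.subtype
  have hcover : ⋃ P, (p P : Set V) = Set.univ := by
    refine Set.eq_univ_of_forall fun g => ?_
    have hg : (g : A) ∈ ⋃ P ∈ associatedPrimes A M, (P : Set A) := hzd ▸ hV g g.2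
    obtain ⟨P, hP, hgP⟩ := Set.mem_iUnion₂.1 hg
    exact Set.mem_iUnion.2 ⟨⟨P, hP⟩, hgP⟩
  obtain ⟨⟨P, hP⟩, hPtop⟩ := Subspace.exists_eq_top_of_iUnion_eq_univ hcover
  have hVP : Ideal.span (V : Set A) ≤ P :=
    Ideal.span_le.2 fun g hg => (hPtop ▸ Submodule.mem_top : (⟨g, hg⟩ : V) ∈ p ⟨P, hP⟩)
  have hxP : x ∈ P := hP.isPrime.radical_le_iff.2 hVP hxV
  exact (hzd ▸ Set.mem_biUnion hP hxP : x ∈ {r : A | IsSMulRegular M r}ᶜ) hx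

end PrimeAvoidance

section PointwiseSMul

open Pointwise Module

theorem finrank_pointwise_smul_of_isSMulRegular {R B M : Type*} [Semiring R] [Monoid B]
    [AddCommMonoid M] [Module R M] [DistribMulAction B M] [SMulCommClass B R M]
    (W : Submodule R M) {b : B} (hb : IsSMulRegular M b) : finrank R ↥(b • W) = finrank R W :=
  (Submodule.equivMapOfInjective (DistribSMul.toLinearMap R M b) hb W).finrank_eq.symm

end PointwiseSMul

section GradedAlgebra

open Pointwise RingTheory.Sequence Module

variable {k A : Type*} [Field k] [CommRing A] [Algebra k A] (𝒜 : ℕ → Submodule k A)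

/-- The degree `t` part of `A ⧸ J`, the image of `𝒜 t`; its dimension is the Hilbert function of
`A ⧸ J` at `t`. -/
def quotientPiece (J : Ideal A) (t : ℕ) : Submodule k (A ⧸ J) :=
  (𝒜 t).map (Ideal.Quotient.mkₐ k J).toLinearMap

instance (J : Ideal A) (t : ℕ) [FiniteDimensional k (𝒜 t)] :
    FiniteDimensional k (quotientPiece 𝒜 J t) :=
  Module.Finite.map (𝒜 t) (Ideal.Quotient.mkₐ k J).toLinearMap

variable {𝒜} [GradedAlgebra 𝒜] {J : Ideal A} {r x g : A} {d t T : ℕ}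

theorem smul_quotientPiece_le (hr : r ∈ 𝒜 d) :
    r • quotientPiece 𝒜 J t ≤ quotientPiece 𝒜 J (d + t) := by
  rintro _ ⟨_, ⟨v, hv, rfl⟩, rfl⟩
  exact ⟨r * v, SetLike.mul_mem_graded hr hv, map_mul (Ideal.Quotient.mk J) r v⟩

theorem smul_quotientPiece_eq_iff (hJ : J.IsHomogeneous 𝒜) (hr : r ∈ 𝒜 d) :
    r • quotientPiece 𝒜 J t = quotientPiece 𝒜 J (d + t) ↔
      𝒜 (d + t) ≤ (J ⊔ Ideal.span {r}).restrictScalars k := by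
  rw [← (smul_quotientPiece_le hr).ge_iff_eq]
  constructor
  · intro h u hu
    obtain ⟨_, ⟨v, -, rfl⟩, hvu⟩ := h ⟨u, hu, rfl⟩
    have hj : u - r * v ∈ J :=
      Ideal.Quotient.eq.1 (hvu.symm.trans (map_mul (Ideal.Quotient.mk J) r v).symm)
    rw [← sub_add_cancel u (r * v)]
    exact Submodule.add_mem_sup hj (Ideal.mem_span_singleton.2 ⟨v, rfl⟩)
  · rintro h _ ⟨u, hu, rfl⟩
    obtain ⟨v, hv, huv⟩ := exists_mem_graded_sub_mul_mem hJ hr hu (h hu)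
    exact ⟨_, ⟨v, hv, rfl⟩, (map_mul _ r v).symm.trans (Ideal.Quotient.eq.2 huv).symm⟩

theorem finrank_quotientPiece_eq (hJ : J.IsHomogeneous 𝒜) (hx : x ∈ 𝒜 1)
    (hreg : IsSMulRegular (A ⧸ J) x)
    (hT : ∀ t > T, 𝒜 t ≤ (J ⊔ Ideal.span {x}).restrictScalars k) (ht : T ≤ t) :
    finrank k (quotientPiece 𝒜 J t) = finrank k (quotientPiece 𝒜 J T) := by
  induction t, ht using Nat.le_induction with
  | base => rfl
  | succ t ht ih =>
    rw [← ih, add_comm, ← (smul_quotientPiece_eq_iff hJ hx).2 (hT _ (by omega)),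
      finrank_pointwise_smul_of_isSMulRegular _ hreg]

theorem le_sup_span_of_isSMulRegular [∀ t, FiniteDimensional k (𝒜 t)] (hJ : J.IsHomogeneous 𝒜)
    (hx : x ∈ 𝒜 1) (hxreg : IsSMulRegular (A ⧸ J) x)
    (hT : ∀ t > T, 𝒜 t ≤ (J ⊔ Ideal.span {x}).restrictScalars k)
    (hg : g ∈ 𝒜 d) (hgreg : IsSMulRegular (A ⧸ J) g) (ht : T ≤ t) :
    𝒜 (d + t) ≤ (J ⊔ Ideal.span {g}).restrictScalars k := by
  rw [← smul_quotientPiece_eq_iff hJ hg]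
  refine Submodule.eq_of_le_of_finrank_eq (smul_quotientPiece_le hg) ?_
  rw [finrank_pointwise_smul_of_isSMulRegular _ hgreg, finrank_quotientPiece_eq hJ hx hxreg hT ht,
    finrank_quotientPiece_eq hJ hx hxreg hT (ht.trans (Nat.le_add_left t d))]

variable [Infinite k] [IsNoetherianRing A] [∀ t, FiniteDimensional k (𝒜 t)] {V : Submodule k A}

theorem exists_isWeaklyRegular_cons_exchange {rs : List A} (hd : 0 < d) (hV : V ≤ 𝒜 d)
    (hx : x ∈ 𝒜 1) (hxV : x ∈ (Ideal.span (V : Set A)).radical)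
    (hrs : ∀ r ∈ rs, ∃ e > 0, r ∈ 𝒜 e) (hreg : IsWeaklyRegular A (x :: rs))
    (hT : ∀ t > T, 𝒜 t ≤ (Ideal.ofList (x :: rs)).restrictScalars k) :
    ∃ g ∈ V, IsWeaklyRegular A (g :: rs) ∧
      ∀ t > T + (d - 1), 𝒜 t ≤ (Ideal.ofList (g :: rs)).restrictScalars k := by
  have hJ : (Ideal.ofList rs).IsHomogeneous 𝒜 :=
    Ideal.homogeneous_span 𝒜 _ fun r hr => (hrs r hr).imp fun _ h => h.2
  obtain ⟨hrsreg, hxreg⟩ := isWeaklyRegular_concat_iff.1 <|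
    isWeaklyRegular_of_perm_of_homogeneous (𝒜 := 𝒜) hreg
      (List.forall_mem_cons.2 ⟨⟨1, one_pos, hx⟩, hrs⟩) (List.perm_append_singleton x rs).symm
  obtain ⟨g, hgV, hgreg⟩ := exists_isSMulRegular_of_mem_radical_span V hxV hxreg
  refine ⟨g, hgV, ?_, fun t ht => ?_⟩
  · exact isWeaklyRegular_of_perm_of_homogeneous (𝒜 := 𝒜)
      (isWeaklyRegular_concat_iff.2 ⟨hrsreg, hgreg⟩)
      (List.forall_mem_append.2 ⟨hrs, List.forall_mem_singleton.2 ⟨d, hd, hV hgV⟩⟩)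
      (List.perm_append_singleton g rs)
  · simp only [Ideal.ofList_cons, sup_comm _ (Ideal.ofList rs)] at hT ⊢
    obtain ⟨s, rfl⟩ := Nat.exists_eq_add_of_le (show d ≤ t by omega)
    exact le_sup_span_of_isSMulRegular hJ hx hxreg hT (hV hgV) hgreg (by omega)

theorem le_span_of_isWeaklyRegular_append {L G : List A} (hd : 0 < d) (hV : V ≤ 𝒜 d)
    (hL : ∀ x ∈ L, x ∈ 𝒜 1) (hLV : ∀ x ∈ L, x ∈ (Ideal.span (V : Set A)).radical)
    (hG : ∀ g ∈ G, g ∈ V) (hreg : IsWeaklyRegular A (L ++ G))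
    (hT : ∀ t > T, 𝒜 t ≤ (Ideal.ofList (L ++ G)).restrictScalars k)
    (ht : T + L.length * (d - 1) < t) : 𝒜 t ≤ (Ideal.span (V : Set A)).restrictScalars k := by
  induction L generalizing G T with
  | nil => exact (hT t (by simpa using ht)).trans (Ideal.span_mono hG)
  | cons x L ih =>
    rw [List.forall_mem_cons] at hL hLV
    have hLG : ∀ r ∈ L ++ G, ∃ e > 0, r ∈ 𝒜 e :=
      List.forall_mem_append.2
        ⟨fun r hr => ⟨1, one_pos, hL.2 r hr⟩, fun r hr => ⟨d, hd, hV (hG r hr)⟩⟩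
    obtain ⟨g, hgV, hgreg, hgT⟩ :=
      exists_isWeaklyRegular_cons_exchange hd hV hL.1 hLV.1 hLG hreg hT
    have hperm : (g :: (L ++ G)).Perm (L ++ g :: G) := List.perm_middle.symm
    have hofList : Ideal.ofList (g :: (L ++ G)) = Ideal.ofList (L ++ g :: G) :=
      congrArg Ideal.span (Set.ext fun _ => hperm.mem_iff)
    refine ih hL.2 hLV.2 (List.forall_mem_cons.2 ⟨hgV, hG⟩)
      (isWeaklyRegular_of_perm_of_homogeneous (𝒜 := 𝒜) hgreg
        (List.forall_mem_cons.2 ⟨⟨d, hd, hV hgV⟩, hLG⟩) hperm) (hofList ▸ hgT) ?_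
    rw [List.length_cons, add_mul] at ht
    omega

end GradedAlgebra

section MvPolynomial

open RingTheory.Sequence

variable {σ R k K : Type*} [CommRing R] [Field k] [Field K] [Algebra k K]

theorem finiteDimensional_homogeneousSubmodule [Finite σ] (t : ℕ) :
    FiniteDimensional k (homogeneousSubmodule σ k t) :=
  Submodule.finiteDimensional_of_le (S₂ := restrictTotalDegree σ k t) fun _ hp =>
    (mem_restrictTotalDegree σ t _).2 (IsHomogeneous.totalDegree_le hp)

theorem isSMulRegular_X_quotient_span_image {s : Set σ} {j : σ} (hj : j ∉ s) :
    IsSMulRegular (MvPolynomial σ R ⧸ Ideal.span (X '' s : Set (MvPolynomial σ R)))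
      (X j : MvPolynomial σ R) := by
  refine (isSMulRegular_quotient_iff_mem_of_smul_mem _ _).2 fun u hu => ?_
  rw [smul_eq_mul] at hu
  rw [mem_ideal_span_X_image] at hu ⊢
  intro a ha
  obtain ⟨i, hi, hai⟩ := hu (Finsupp.single j 1 + a) <| by
    rwa [mem_support_iff, coeff_X_mul, ← mem_support_iff]
  have hji : j ≠ i := fun h => hj (h ▸ hi)
  exact ⟨i, hi, by simpa [Finsupp.single_apply, hji] using hai⟩

theorem ofList_map_X (l : List σ) :
    Ideal.ofList (l.map X : List (MvPolynomial σ R)) = Ideal.span (X '' {i | i ∈ l}) := by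
  simp only [Ideal.ofList, List.mem_map, Set.image, Set.mem_ofPred_eq]

theorem isWeaklyRegular_map_X {l : List σ} (hl : l.Nodup) :
    IsWeaklyRegular (MvPolynomial σ R) (l.map X : List (MvPolynomial σ R)) := by
  induction l using List.reverseRecOn with
  | nil => exact IsWeaklyRegular.nil _ _
  | append_singleton l i ih =>
    obtain ⟨hl, -, hi⟩ := List.nodup_append.1 hl
    rw [List.map_append, List.map_singleton, isWeaklyRegular_concat_iff, ofList_map_X]
    have hil : i ∉ l := fun h => hi i h i (List.mem_singleton_self i) rfl
    exact ⟨ih hl, isSMulRegular_X_quotient_span_image hil⟩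

theorem mem_idealOfVars_of_isHomogeneous {p : MvPolynomial σ R} {t : ℕ} (hp : p.IsHomogeneous t)
    (ht : 0 < t) : p ∈ idealOfVars σ R := by
  rw [← pow_one (idealOfVars σ R), mem_pow_idealOfVars_iff]
  intro a ha
  rwa [hp.degree_eq_sum_deg_support ha] at ht

theorem X_mem_radical_of_forall_exists_aeval_ne_zero [IsAlgClosed K] [Finite σ]
    {I : Ideal (MvPolynomial σ k)} (hI : ∀ z : σ → K, z ≠ 0 → ∃ p ∈ I, aeval z p ≠ 0) (j : σ) :
    X j ∈ I.radical := by
  rw [← vanishingIdeal_zeroLocus_eq_radical (K := K), mem_vanishingIdeal_iff]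
  intro z hz
  have hz0 : z = 0 := by
    by_contra h
    obtain ⟨p, hp, hpz⟩ := hI z h
    exact hpz (hz p hp)
  rw [aeval_X, hz0, Pi.zero_apply]

attribute [local instance] MvPolynomial.gradedAlgebra finiteDimensional_homogeneousSubmodule

theorem mem_span_of_X_mem_radical [Infinite k] [Fintype σ] {d t : ℕ} (hd : 0 < d)
    {s : Set (MvPolynomial σ k)} (hs : ∀ p ∈ s, p.IsHomogeneous d)
    (hX : ∀ j, X j ∈ (Ideal.span s).radical) (ht : Fintype.card σ * (d - 1) < t)
    {p : MvPolynomial σ k} (hp : p.IsHomogeneous t) : p ∈ Ideal.span s := by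
  have hspan : Ideal.span (Submodule.span k s : Set (MvPolynomial σ k)) = Ideal.span s :=
    Submodule.span_span_of_tower k _ s
  have hvars : ∀ t > 0, homogeneousSubmodule σ k t ≤
      (Ideal.ofList (Finset.univ.toList.map X ++ [])).restrictScalars k := fun t ht p hp => by
    simpa [ofList_map_X, idealOfVars] using mem_idealOfVars_of_isHomogeneous hp ht
  rw [← hspan] at hX ⊢
  refine le_span_of_isWeaklyRegular_append (L := Finset.univ.toList.map X) (G := []) (d := d) hd
    (Submodule.span_le.2 fun p hp => hs p hp) ?_ ?_ ?_ ?_ hvars ?_ hp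
  · simp [isHomogeneous_X]
  · simpa using hX
  · simp
  · simpa only [List.append_nil] using isWeaklyRegular_map_X (Finset.nodup_toList _)
  · simpa using ht

theorem isUnit_of_isHomogeneous_zero {p : MvPolynomial σ k} (hp : p.IsHomogeneous 0)
    (hp0 : p ≠ 0) : IsUnit p := by
  have hC : p = C (coeff 0 p) := totalDegree_eq_zero_iff_eq_C.1 (Nat.le_zero.1 hp.totalDegree_le)
  have hcoeff : coeff 0 p ≠ 0 := fun h => hp0 (by rw [hC, h, C_0])
  exact hC ▸ (isUnit_iff_ne_zero.2 hcoeff).map C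

theorem mem_span_range_of_forall_exists_aeval_ne_zero {ι : Type*} [Infinite k] [IsAlgClosed K]
    [Fintype σ] [Nonempty σ] {d t : ℕ} {f : ι → MvPolynomial σ k} (hf : ∀ i, (f i).IsHomogeneous d)
    (hnozero : ∀ z : σ → K, z ≠ 0 → ∃ i, aeval z (f i) ≠ 0)
    (ht : Fintype.card σ * d < t + Fintype.card σ) {p : MvPolynomial σ k}
    (hp : p.IsHomogeneous t) : p ∈ Ideal.span (Set.range f) := by
  rcases d.eq_zero_or_pos with rfl | hd
  · obtain ⟨i, hi⟩ := hnozero 1 one_ne_zero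
    have hunit : IsUnit (f i) :=
      isUnit_of_isHomogeneous_zero (hf i) fun h => hi (by rw [h, map_zero])
    rw [Ideal.eq_top_of_isUnit_mem _ (Ideal.subset_span (Set.mem_range_self i)) hunit]
    exact Submodule.mem_top
  · have hbound : Fintype.card σ * (d - 1) < t := by
      have := Nat.le_mul_of_pos_right (Fintype.card σ) hd
      rw [Nat.mul_sub_one]
      omega
    refine mem_span_of_X_mem_radical hd (Set.forall_mem_range.2 hf) (fun j => ?_) hbound hp
    refine X_mem_radical_of_forall_exists_aeval_ne_zero (K := K) (fun z hz => ?_) j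
    obtain ⟨i, hi⟩ := hnozero z hz
    exact ⟨f i, Ideal.subset_span ⟨i, rfl⟩, hi⟩

theorem stmt11_general {ι : Type*} [Infinite k] [IsAlgClosed K] [Fintype σ] [Nonempty σ]
    [Fintype ι] {d ρ : ℕ} {f : ι → MvPolynomial σ k} (hf : ∀ i, (f i).IsHomogeneous d)
    (hnozero : ∀ z : σ → K, z ≠ 0 → ∃ i, aeval z (f i) ≠ 0)
    {φ : MvPolynomial σ k} (hφ : φ.IsHomogeneous ρ)
    (hρ : Fintype.card σ * d < ρ + Fintype.card σ) :
    ∃ q : ι → MvPolynomial σ k, (∀ i, (q i).IsHomogeneous (ρ - d)) ∧ ∑ i, f i * q i = φ := by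
  have hcard : 0 < Fintype.card σ := Fintype.card_pos
  have hdρ : d ≤ ρ := by nlinarith
  refine exists_mem_graded_sum_mul_eq (𝒜 := homogeneousSubmodule σ k) hf ?_
    (mem_span_range_of_forall_exists_aeval_ne_zero hf hnozero hρ hφ)
  rwa [Nat.add_sub_cancel' hdρ]

end MvPolynomial

/- STATEMENT 11 (Macaulay's theorem): if `f₁,…,f_m` are homogeneous of degree `d`
in `ℂ[z₀,…,z_n]` with no common zero in `ℙⁿ` (i.e. no common zero besides the
origin), and `φ` is homogeneous of degree `ρ` with `ρ ≥ (n+1)d - n` (stated as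
`(n+1)*d ≤ ρ + n` to avoid truncated subtraction), then `φ = ∑ f_j q_j` with
`q_j` homogeneous of degree `ρ - d`. -/
theorem stmt11 (n m d ρ : ℕ)
    (f : Fin m → MvPolynomial (Fin (n + 1)) ℂ)
    (hf : ∀ i, (f i).IsHomogeneous d)
    (hnozero : ∀ z : Fin (n + 1) → ℂ, z ≠ 0 → ∃ i, eval z (f i) ≠ 0)
    (φ : MvPolynomial (Fin (n + 1)) ℂ) (hφ : φ.IsHomogeneous ρ)
    (hρ : (n + 1) * d ≤ ρ + n) :
    ∃ q : Fin m → MvPolynomial (Fin (n + 1)) ℂ,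
      (∀ i, (q i).IsHomogeneous (ρ - d)) ∧ ∑ i, f i * q i = φ :=
  stmt11_general hf hnozero hφ
    (by rw [Fintype.card_fin]; omega)
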